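/- arXiv:2202.12942 — 3 statements merged into one kernel-verified Lean document; each statement's English description precedes it below -/
import Mathlib

section
/- Convolution theorem for the QPFT: let f, g ∈ L¹(ℝ) and define the quadratic-phase convolution (f ∗_μ g)(t) = ∫_ℝ f(z) g(t − z) e^{−i(a(t² − z²) + d(t − z))} dz. Then for every ξ ∈ ℝ, Q_μ[f ∗_μ g](ξ) = √(2πi/b) · e^{−i(cξ² + eξ)} · Q_μ[f](ξ) · Q_μ[t ↦ e^{−i(at² + dt)} g(t)](ξ), where √(2πi/b) denotes the reciprocal of √(b/(2πi)). -/
open MeasureTheory Complex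

/-- The constant √(b/(2πi)) = √(b/(2π))·e^{−iπ/4}. -/
noncomputable def qpConst (b : ℝ) : ℂ :=
  (Real.sqrt (b / (2 * Real.pi)) : ℂ) * Complex.exp (-((Real.pi / 4 : ℝ) : ℂ) * Complex.I)

/-- The dilation ψ_α(t) = α^{−1/2} ψ(t/α). -/
noncomputable def dil (ψ : ℝ → ℂ) (α : ℝ) (t : ℝ) : ℂ :=
  ((α ^ (-(1 / 2 : ℝ)) : ℝ) : ℂ) * ψ (t / α)

/-- The quadratic-phase Fourier transform. -/
noncomputable def QPFT (a b c d e : ℝ) (f : ℝ → ℂ) (ξ : ℝ) : ℂ :=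
  qpConst b * ∫ t : ℝ, f t *
    Complex.exp (Complex.I * ((a * t ^ 2 + b * t * ξ + c * ξ ^ 2 + d * t + e * ξ : ℝ) : ℂ))

/-- The quadratic-phase wave packet transform of `f` with respect to the wavelet `ψ`. -/
noncomputable def QPWPT (a b c d e : ℝ) (ψ f : ℝ → ℂ) (ξ β α : ℝ) : ℂ :=
  qpConst b * ∫ t : ℝ,
    Complex.exp (Complex.I * ((2 * a * t ^ 2 + b * t * ξ + c * ξ ^ 2 + 2 * d * t + e * ξ
      - a * β ^ 2 - d * β : ℝ) : ℂ)) * f t * (starRingEnd ℂ) (dil ψ α (t - β))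

/-- The analyzing packet ψ^μ_{ξ,β,α}. -/
noncomputable def qpwPacket (a b c d e : ℝ) (ψ : ℝ → ℂ) (ξ β α : ℝ) (t : ℝ) : ℂ :=
  (starRingEnd ℂ) (qpConst b) *
    Complex.exp (-Complex.I * ((2 * a * t ^ 2 + b * t * ξ + c * ξ ^ 2 + 2 * d * t + e * ξ
      - a * β ^ 2 - d * β : ℝ) : ℂ)) * dil ψ α (t - β)

/-- The quadratic-phase convolution. -/
noncomputable def qpConv (a d : ℝ) (f g : ℝ → ℂ) (t : ℝ) : ℂ :=
  ∫ z : ℝ, f z * g (t - z) *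
    Complex.exp (-Complex.I * ((a * (t ^ 2 - z ^ 2) + d * (t - z) : ℝ) : ℂ))

/-!
Write `χ t = exp (i (a t² + d t))`. Up to the unimodular factor `exp (i (c ξ² + e ξ))` and the
constant `√(b/(2πi))`, the QPFT of `f` is the Fourier transform of `χ f` at `-b ξ / (2π)`.
The phase in the quadratic-phase convolution is `χ z / χ t`, so `χ (f ∗_μ g) = (χ f) ⋆ g`, and the
classical convolution theorem applies. Multiplying by `χ⁻¹` before taking the QPFT yields the
Fourier transform of the unmodulated `g`.
-/

open scoped FourierTransform Convolution

/-- The chirp `t ↦ exp (i (a t² + d t))`, the unimodular factor relating the quadratic-phase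
transform and convolution to the classical ones. -/
noncomputable def chirp (a d t : ℝ) : ℂ :=
  Complex.exp (Complex.I * ((a * t ^ 2 + d * t : ℝ) : ℂ))

lemma chirp_ne_zero (a d t : ℝ) : chirp a d t ≠ 0 :=
  Complex.exp_ne_zero _

lemma inv_chirp (a d t : ℝ) :
    (chirp a d t)⁻¹ = Complex.exp (-Complex.I * ((a * t ^ 2 + d * t : ℝ) : ℂ)) := by
  rw [chirp, ← Complex.exp_neg, neg_mul]

lemma norm_chirp (a d t : ℝ) : ‖chirp a d t‖ = 1 :=
  Complex.norm_exp_I_mul_ofReal _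

lemma continuous_chirp (a d : ℝ) : Continuous (chirp a d) := by
  unfold chirp
  fun_prop

lemma integrable_chirp_mul {μ : Measure ℝ} {f : ℝ → ℂ} (hf : Integrable f μ) (a d : ℝ) :
    Integrable (chirp a d * f) μ :=
  hf.bdd_mul (continuous_chirp a d).aestronglyMeasurable <|
    .of_forall fun t => (norm_chirp a d t).le

lemma qpConst_ne_zero {b : ℝ} (hb : 0 < b) : qpConst b ≠ 0 := by
  have hsqrt : Real.sqrt (b / (2 * Real.pi)) ≠ 0 := by positivity
  exact mul_ne_zero (Complex.ofReal_ne_zero.mpr hsqrt) (Complex.exp_ne_zero _)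

lemma QPFT_eq_fourier_chirp_mul (a b c d e : ℝ) (f : ℝ → ℂ) (ξ : ℝ) :
    QPFT a b c d e f ξ =
      qpConst b * (chirp c e ξ * 𝓕 (chirp a d * f) (-(b * ξ) / (2 * Real.pi))) := by
  rw [QPFT, Real.fourier_real_eq_integral_exp_smul, ← integral_const_mul (chirp c e ξ)]
  congr 2 with t
  have hfreq : -2 * Real.pi * t * (-(b * ξ) / (2 * Real.pi)) = b * t * ξ := by
    field_simp
  have hphase : Complex.exp (Complex.I *
        ((a * t ^ 2 + b * t * ξ + c * ξ ^ 2 + d * t + e * ξ : ℝ) : ℂ)) =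
      chirp c e ξ * (Complex.exp ((b * t * ξ : ℝ) * Complex.I) * chirp a d t) := by
    simp only [chirp, ← Complex.exp_add]
    congr 1
    push_cast
    ring
  rw [hfreq, hphase, smul_eq_mul, Pi.mul_apply]
  ring

lemma chirp_mul_qpConv (a d : ℝ) (f g : ℝ → ℂ) :
    chirp a d * qpConv a d f g = (chirp a d * f) ⋆[ContinuousLinearMap.mul ℂ ℂ] g := by
  ext t
  rw [Pi.mul_apply, qpConv, convolution_mul, ← integral_const_mul]
  congr 1 with z
  have hphase : chirp a d t *
      Complex.exp (-Complex.I * ((a * (t ^ 2 - z ^ 2) + d * (t - z) : ℝ) : ℂ)) =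
      chirp a d z := by
    simp only [chirp, ← Complex.exp_add]
    congr 1
    push_cast
    ring
  rw [Pi.mul_apply, ← hphase]
  ring

theorem qpft_convolution (a b c d e : ℝ) (hb : 0 < b) (f g : ℝ → ℂ)
    (hf : Integrable f volume) (hg : Integrable g volume) (ξ : ℝ) :
    QPFT a b c d e (qpConv a d f g) ξ
      = (qpConst b)⁻¹ * Complex.exp (-Complex.I * ((c * ξ ^ 2 + e * ξ : ℝ) : ℂ)) *
        QPFT a b c d e f ξ *
        QPFT a b c d e
          (fun t => Complex.exp (-Complex.I * ((a * t ^ 2 + d * t : ℝ) : ℂ)) * g t) ξ := by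
  have hmod : chirp a d * (fun t => (chirp a d t)⁻¹ * g t) = g :=
    funext fun t => mul_inv_cancel_left₀ (chirp_ne_zero a d t) (g t)
  have hC := qpConst_ne_zero hb
  have hχ := chirp_ne_zero c e ξ
  simp only [← inv_chirp, QPFT_eq_fourier_chirp_mul]
  rw [chirp_mul_qpConv, Real.fourier_mul_convolution_eq (integrable_chirp_mul hf a d) hg, hmod]
  field_simp
end

section
/- Let 1 ≤ p < ∞, let ψ ∈ L^p(ℝ) and f ∈ L¹(ℝ). Then for every fixed ξ ∈ ℝ and α > 0, the function β ↦ W^μ_f(ξ, β, α) belongs to L^p(ℝ) and (∫_ℝ |W^μ_f(ξ, β, α)|^p dβ)^{1/p} ≤ α^{1/p − 1/2} · √(b/(2π)) · ‖ψ‖_{L^p(ℝ)} ‖f‖_{L¹(ℝ)}. -/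
open MeasureTheory Complex

/-!
The chirp in the kernel of the transform has modulus one, so `|W(ξ, β, α)|` is at most `√(b/(2π))`
times the convolution at `β` of `|f|` with the reflection of `|ψ_α|`. Young's inequality
`‖F ⋆ G‖_p ≤ ‖F‖₁ ‖G‖_p` bounds the `L^p` norm of this convolution, and a change of variables gives
`‖ψ_α‖_p = α^{1/p − 1/2} ‖ψ‖_p`. Young's inequality for finite `p` comes from Hölder's inequality
applied to `F G = F^{1 − 1/p} (F G^p)^{1/p}`, followed by Tonelli's theorem.
-/

open scoped ENNReal

theorem lintegral_mul_rpow_le {X : Type*} [MeasurableSpace X] {μ : Measure X} {f g : X → ℝ≥0∞}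
    (hf : AEMeasurable f μ) (hg : AEMeasurable g μ) {p : ℝ} (hp : 1 ≤ p) :
    (∫⁻ x, f x * g x ∂μ) ^ p ≤ (∫⁻ x, f x ∂μ) ^ (p - 1) * ∫⁻ x, f x * g x ^ p ∂μ := by
  have hp0 : 0 < p := by linarith
  have hp_inv : p⁻¹ ≤ 1 := inv_le_one_of_one_le₀ hp
  have split (x : X) : f x * g x = f x ^ (1 - p⁻¹) * (f x * g x ^ p) ^ p⁻¹ := by
    rw [ENNReal.mul_rpow_of_nonneg _ _ (by positivity), ENNReal.rpow_rpow_inv hp0.ne', ← mul_assoc,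
      ← ENNReal.rpow_add_of_nonneg _ _ (by linarith) (by positivity), sub_add_cancel,
      ENNReal.rpow_one]
  have holder := ENNReal.lintegral_mul_norm_pow_le hf (hf.mul (hg.pow_const p))
    (p := 1 - p⁻¹) (q := p⁻¹) (by linarith) (by positivity) (by ring)
  calc (∫⁻ x, f x * g x ∂μ) ^ p
      ≤ ((∫⁻ x, f x ∂μ) ^ (1 - p⁻¹) * (∫⁻ x, f x * g x ^ p ∂μ) ^ p⁻¹) ^ p := by
        simp_rw [split]
        exact ENNReal.rpow_le_rpow holder hp0.le
    _ = (∫⁻ x, f x ∂μ) ^ (p - 1) * ∫⁻ x, f x * g x ^ p ∂μ := by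
        rw [ENNReal.mul_rpow_of_nonneg _ _ hp0.le, ENNReal.rpow_inv_rpow hp0.ne',
          ← ENNReal.rpow_mul, sub_mul, one_mul, inv_mul_cancel₀ hp0.ne']

section Young

variable {G : Type*} [MeasurableSpace G] [Group G] [MeasurableMul₂ G] [MeasurableInv G]
  {μ : Measure G} [μ.IsMulLeftInvariant] [SFinite μ] {f g : G → ℝ≥0∞}

@[to_additive]
theorem lintegral_mlconvolution (hf : AEMeasurable f μ) (hg : AEMeasurable g μ) :
    ∫⁻ x, (f ⋆ₘₗ[μ] g) x ∂μ = (∫⁻ x, f x ∂μ) * ∫⁻ x, g x ∂μ := by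
  simp_rw [mlconvolution_def]
  rw [lintegral_lintegral_swap (by fun_prop), ← lintegral_mul_const'' _ hf]
  refine lintegral_congr fun y => ?_
  have hgy : AEMeasurable (fun x => g (y⁻¹ * x)) μ :=
    hg.comp_quasiMeasurePreserving (measurePreserving_mul_left μ y⁻¹).quasiMeasurePreserving
  rw [lintegral_const_mul'' _ hgy, lintegral_mul_left_eq_self]

@[to_additive]
theorem lintegral_mlconvolution_rpow_le (hf : AEMeasurable f μ) (hg : AEMeasurable g μ)
    {p : ℝ} (hp : 1 ≤ p) :
    ∫⁻ x, (f ⋆ₘₗ[μ] g) x ^ p ∂μ ≤ (∫⁻ x, f x ∂μ) ^ p * ∫⁻ x, g x ^ p ∂μ :=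
  have hgp : AEMeasurable (fun x => g x ^ p) μ := hg.pow_const p
  calc ∫⁻ x, (f ⋆ₘₗ[μ] g) x ^ p ∂μ
      ≤ ∫⁻ x, (∫⁻ y, f y ∂μ) ^ (p - 1) * (f ⋆ₘₗ[μ] fun y => g y ^ p) x ∂μ :=
        lintegral_mono fun _ => lintegral_mul_rpow_le hf (by fun_prop) hp
    _ = (∫⁻ x, f x ∂μ) ^ (p - 1) * ((∫⁻ x, f x ∂μ) * ∫⁻ x, g x ^ p ∂μ) := by
        rw [lintegral_const_mul'' _ (aemeasurable_mlconvolution hf hgp),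
          lintegral_mlconvolution hf hgp]
    _ = (∫⁻ x, f x ∂μ) ^ p * ∫⁻ x, g x ^ p ∂μ := by
        nth_rw 2 [← ENNReal.rpow_one (∫⁻ x, f x ∂μ)]
        rw [← mul_assoc, ← ENNReal.rpow_add_of_nonneg _ _ (by linarith) zero_le_one,
          sub_add_cancel]

@[to_additive]
theorem mlconvolution_le_lintegral_mul_eLpNorm_top (hf : AEMeasurable f μ) (x : G) :
    (f ⋆ₘₗ[μ] g) x ≤ (∫⁻ y, f y ∂μ) * eLpNorm g ∞ μ := by
  have hg_le : ∀ᵐ y ∂μ, g (y⁻¹ * x) ≤ eLpNorm g ∞ μ := by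
    rw [eLpNorm_exponent_top]
    exact ((quasiMeasurePreserving_mul_right μ x).comp (quasiMeasurePreserving_inv μ)).ae
      (ae_le_eLpNormEssSup (f := g))
  rw [mlconvolution_def, ← lintegral_mul_const'' _ hf]
  exact lintegral_mono_ae (hg_le.mono fun y hy => mul_le_mul_right hy _)

@[to_additive]
theorem eLpNorm_mlconvolution_le (hf : AEMeasurable f μ) (hg : AEMeasurable g μ)
    {p : ℝ≥0∞} (hp : 1 ≤ p) :
    eLpNorm (f ⋆ₘₗ[μ] g) p μ ≤ eLpNorm f 1 μ * eLpNorm g p μ := by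
  rw [eLpNorm_one_eq_lintegral_enorm]
  simp only [enorm_eq_self]
  obtain rfl | hp_top := eq_or_ne p ∞
  · rw [eLpNorm_exponent_top]
    exact essSup_le_of_ae_le _ (.of_forall (mlconvolution_le_lintegral_mul_eLpNorm_top hf))
  have hp0 : p ≠ 0 := (one_pos.trans_le hp).ne'
  have hp1 : 1 ≤ p.toReal := by simpa using ENNReal.toReal_mono hp_top hp
  simp only [eLpNorm_eq_lintegral_rpow_enorm_toReal hp0 hp_top, enorm_eq_self, one_div]
  rw [← ENNReal.rpow_rpow_inv (by positivity : p.toReal ≠ 0) (∫⁻ x, f x ∂μ),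
    ← ENNReal.mul_rpow_of_nonneg _ _ (by positivity)]
  exact ENNReal.rpow_le_rpow (lintegral_mlconvolution_rpow_le hf hg hp1) (by positivity)

end Young

theorem eLpNorm_comp_smul {E F : Type*} [NormedAddCommGroup E] [NormedSpace ℝ E]
    [FiniteDimensional ℝ E] [MeasurableSpace E] [BorelSpace E] [TopologicalSpace F]
    [ContinuousENorm F] (μ : Measure E) [μ.IsAddHaarMeasure] (g : E → F) {r : ℝ} (hr : r ≠ 0)
    (p : ℝ≥0∞) :
    eLpNorm (fun x => g (r • x)) p μ =
      ENNReal.ofReal |(r ^ Module.finrank ℝ E)⁻¹| ^ (1 / p).toReal * eLpNorm g p μ := by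
  have h_emb : MeasurableEmbedding (r • · : E → E) :=
    (Homeomorph.smulOfNeZero r hr).measurableEmbedding
  have h_scale : ENNReal.ofReal |(r ^ Module.finrank ℝ E)⁻¹| ≠ 0 := by simp [hr]
  rw [← smul_eq_mul, ← eLpNorm_smul_measure_of_ne_zero h_scale, ← Measure.map_addHaar_smul μ hr,
    h_emb.eLpNorm_map_measure, Function.comp_def]

theorem eLpNorm_dil (ψ : ℝ → ℂ) {α : ℝ} (hα : 0 < α) (p : ℝ≥0∞) :
    eLpNorm (dil ψ α) p volume =
      ENNReal.ofReal (α ^ ((1 / p).toReal - 1 / 2)) * eLpNorm ψ p volume := by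
  have h_dil : dil ψ α = ((α ^ (-(1 / 2 : ℝ)) : ℝ) : ℂ) • fun t => ψ (α⁻¹ • t) := by
    ext t
    simp [dil, div_eq_inv_mul]
  have h_enorm : ‖((α ^ (-(1 / 2 : ℝ)) : ℝ) : ℂ)‖ₑ = ENNReal.ofReal (α ^ (-(1 / 2 : ℝ))) := by
    rw [← ofReal_norm, Complex.norm_of_nonneg (by positivity)]
  rw [h_dil, eLpNorm_const_smul, eLpNorm_comp_smul _ _ (inv_ne_zero hα.ne'), h_enorm,
    Module.finrank_self, pow_one, inv_inv, abs_of_pos hα, ENNReal.ofReal_rpow_of_pos hα,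
    ← mul_assoc, ← ENNReal.ofReal_mul (by positivity), ← Real.rpow_add hα, neg_add_eq_sub]

theorem aestronglyMeasurable_dil {ψ : ℝ → ℂ} (hψ : AEStronglyMeasurable ψ volume)
    {α : ℝ} (hα : α ≠ 0) : AEStronglyMeasurable (dil ψ α) volume := by
  have h_div : Measure.QuasiMeasurePreserving (fun t : ℝ => t / α) volume volume := by
    simp only [div_eq_inv_mul]
    exact Measure.quasiMeasurePreserving_smul volume (inv_ne_zero hα)
  exact (hψ.comp_quasiMeasurePreserving h_div).const_mul _

theorem norm_qpConst (b : ℝ) : ‖qpConst b‖ = √(b / (2 * Real.pi)) := by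
  rw [qpConst, norm_mul, ← Complex.ofReal_neg, Complex.norm_exp_ofReal_mul_I, mul_one,
    Complex.norm_of_nonneg (Real.sqrt_nonneg _)]

section QPWPT

variable (a b c d e : ℝ) {ψ f : ℝ → ℂ} (ξ : ℝ) {α : ℝ}

theorem aestronglyMeasurable_QPWPT (hψ : AEStronglyMeasurable ψ volume)
    (hf : AEStronglyMeasurable f volume) (hα : α ≠ 0) :
    AEStronglyMeasurable (fun β => QPWPT a b c d e ψ f ξ β α) volume := by
  have h_sub : Measure.QuasiMeasurePreserving (fun z : ℝ × ℝ => z.2 - z.1)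
      (volume.prod volume) volume :=
    (quasiMeasurePreserving_sub volume volume).comp
      Measure.measurePreserving_swap.quasiMeasurePreserving
  have h_packet : AEStronglyMeasurable
      (fun z : ℝ × ℝ => (starRingEnd ℂ) (dil ψ α (z.2 - z.1))) (volume.prod volume) :=
    continuous_conj.comp_aestronglyMeasurable
      ((aestronglyMeasurable_dil hψ hα).comp_quasiMeasurePreserving h_sub)
  have h_phase : Continuous fun z : ℝ × ℝ => Complex.exp (Complex.I *
      ((2 * a * z.2 ^ 2 + b * z.2 * ξ + c * ξ ^ 2 + 2 * d * z.2 + e * ξ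
        - a * z.1 ^ 2 - d * z.1 : ℝ) : ℂ)) := by fun_prop
  have h_integrand := (h_phase.aestronglyMeasurable.mul hf.comp_snd).mul h_packet
  exact h_integrand.integral_prod_right'.const_mul _

theorem enorm_QPWPT_le_lconvolution (β : ℝ) :
    ‖QPWPT a b c d e ψ f ξ β α‖ₑ ≤
      ‖qpConst b‖ₑ * ((fun t => ‖f t‖ₑ) ⋆ₗ fun t => ‖dil ψ α (-t)‖ₑ) β := by
  rw [QPWPT, enorm_mul, lconvolution_def]
  gcongr
  refine (enorm_integral_le_lintegral_enorm _).trans_eq (lintegral_congr fun t => ?_)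
  rw [enorm_mul, enorm_mul, enorm_exp_I_mul_ofReal, one_mul, RCLike.enorm_conj,
    neg_add_rev, neg_neg, neg_add_eq_sub]

theorem eLpNorm_QPWPT_le (hψ : AEStronglyMeasurable ψ volume) (hf : AEStronglyMeasurable f volume)
    (hα : 0 < α) {p : ℝ≥0∞} (hp : 1 ≤ p) :
    eLpNorm (fun β => QPWPT a b c d e ψ f ξ β α) p volume ≤
      ‖qpConst b‖ₑ * (eLpNorm f 1 volume *
        (ENNReal.ofReal (α ^ ((1 / p).toReal - 1 / 2)) * eLpNorm ψ p volume)) := by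
  have h_dil : AEStronglyMeasurable (dil ψ α) volume := aestronglyMeasurable_dil hψ hα.ne'
  have h_refl : AEMeasurable (fun t => ‖dil ψ α (-t)‖ₑ) volume :=
    (h_dil.comp_measurePreserving (Measure.measurePreserving_neg volume)).enorm
  calc eLpNorm (fun β => QPWPT a b c d e ψ f ξ β α) p volume
      ≤ ‖qpConst b‖ₑ *
          eLpNorm ((fun t => ‖f t‖ₑ) ⋆ₗ fun t => ‖dil ψ α (-t)‖ₑ) p volume :=
        eLpNorm_le_mul_eLpNorm_of_ae_le_mul'' p
          (aemeasurable_lconvolution hf.enorm h_refl).aestronglyMeasurable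
          (.of_forall fun β => enorm_QPWPT_le_lconvolution a b c d e ξ β)
    _ ≤ ‖qpConst b‖ₑ *
          (eLpNorm (fun t => ‖f t‖ₑ) 1 volume * eLpNorm (fun t => ‖dil ψ α (-t)‖ₑ) p volume) := by
        gcongr
        exact eLpNorm_lconvolution_le hf.enorm h_refl hp
    _ = ‖qpConst b‖ₑ * (eLpNorm f 1 volume *
          (ENNReal.ofReal (α ^ ((1 / p).toReal - 1 / 2)) * eLpNorm ψ p volume)) := by
        rw [← eLpNorm_dil ψ hα, eLpNorm_enorm, eLpNorm_enorm (fun t => dil ψ α (-t)),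
          ← eLpNorm_comp_measurePreserving h_dil (Measure.measurePreserving_neg volume),
          Function.comp_def]

end QPWPT

theorem qpwpt_lp_bound_general (a b c d e : ℝ) (_hb : 0 < b) {p : ℝ≥0∞} (hp : 1 ≤ p)
    {ψ f : ℝ → ℂ} (hψ : MemLp ψ p volume) (hf : Integrable f volume)
    (ξ : ℝ) {α : ℝ} (hα : 0 < α) :
    MemLp (fun β => QPWPT a b c d e ψ f ξ β α) p volume ∧
    lpNorm (fun β => QPWPT a b c d e ψ f ξ β α) p volume
      ≤ α ^ ((1 / p).toReal - 1 / 2) * √(b / (2 * Real.pi)) *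
        lpNorm ψ p volume * lpNorm f 1 volume := by
  have hW_meas := aestronglyMeasurable_QPWPT a b c d e ξ hψ.1 hf.1 hα.ne'
  have hW_le := eLpNorm_QPWPT_le a b c d e ξ hψ.1 hf.1 hα hp
  have hψ_fin := hψ.eLpNorm_ne_top
  have hf_fin := (memLp_one_iff_integrable.2 hf).eLpNorm_ne_top
  have h_fin : ‖qpConst b‖ₑ * (eLpNorm f 1 volume *
      (ENNReal.ofReal (α ^ ((1 / p).toReal - 1 / 2)) * eLpNorm ψ p volume)) ≠ ∞ := by
    finiteness
  refine ⟨⟨hW_meas, hW_le.trans_lt h_fin.lt_top⟩, ?_⟩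
  have h_real := ENNReal.toReal_mono h_fin hW_le
  simp only [ENNReal.toReal_mul, toReal_eLpNorm hW_meas, toReal_eLpNorm hψ.1,
    toReal_eLpNorm hf.1, toReal_enorm, norm_qpConst,
    ENNReal.toReal_ofReal (Real.rpow_nonneg hα.le _)] at h_real
  exact h_real.trans_eq (by ring)

theorem qpwpt_lp_bound (a b c d e : ℝ) (hb : 0 < b) (p : ℝ) (hp : 1 ≤ p) (ψ f : ℝ → ℂ)
    (hψ : MemLp ψ (ENNReal.ofReal p) volume) (hf : Integrable f volume)
    (ξ α : ℝ) (hα : 0 < α) :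
    MemLp (fun β => QPWPT a b c d e ψ f ξ β α) (ENNReal.ofReal p) volume ∧
    (∫ β : ℝ, ‖QPWPT a b c d e ψ f ξ β α‖ ^ p) ^ (1 / p)
      ≤ α ^ (1 / p - 1 / 2) * Real.sqrt (b / (2 * Real.pi)) *
        (eLpNorm ψ (ENNReal.ofReal p) volume).toReal * (∫ t : ℝ, ‖f t‖) := by
  have hp0 : 0 < p := by linarith
  obtain ⟨hW, h_le⟩ :=
    qpwpt_lp_bound_general a b c d e hb (ENNReal.one_le_ofReal.2 hp) hψ hf ξ hα
  rw [lpNorm_eq_integral_norm_rpow_toReal (by simpa) ENNReal.ofReal_ne_top hW.1,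
    lpNorm_one_eq_integral_norm hf.1, ← toReal_eLpNorm hψ.1] at h_le
  simp only [one_div, ENNReal.toReal_inv, ENNReal.toReal_ofReal hp0.le] at h_le ⊢
  exact ⟨hW, h_le⟩
end

section
/- Energy conservation for the QP-WPT: let f ∈ L¹(ℝ) ∩ L²(ℝ), let ψ ∈ L¹(ℝ) ∩ L²(ℝ), and fix α > 0. Then ∫_ℝ ∫_ℝ |W^μ_f(ξ, β, α)|² dξ dβ = ‖ψ‖²_{L²(ℝ)} · ‖f‖²_{L²(ℝ)}. -/
open MeasureTheory Complex

/-!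
Up to unimodular factors and the constant `qpConst b`, the wave packet transform at `(ξ, β)` is the
windowed Fourier transform of the chirped signal `e ^ (i(2at² + 2dt)) f t` with window `ψ_α`, at
position `β` and frequency `-bξ/2π`. The substitution in `ξ` cancels `‖qpConst b‖² = b/2π`,
Plancherel in the frequency and Fubini in the position give the energy of a windowed Fourier
transform, and neither the chirp nor the dilation changes `L²` norms. A windowed `L²` signal is in
`L¹` for every position of an `L²` window and in `L²` for almost every one, which is what Plancherel
asks for.
-/

open scoped FourierTransform SchwartzMap ContDiff ComplexConjugate

section Plancherel

variable {V H : Type*} [NormedAddCommGroup V] [InnerProductSpace ℝ V] [FiniteDimensional ℝ V]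
  [MeasurableSpace V] [BorelSpace V] [NormedAddCommGroup H]

theorem integral_smul_fourier_eq [NormedSpace ℂ H] [CompleteSpace H] {φ : V → ℂ} {g : V → H}
    (hφ : Integrable φ) (hg : Integrable g) : ∫ ξ, φ ξ • 𝓕 g ξ = ∫ x, 𝓕 φ x • g x := by
  simpa using! (VectorFourier.integral_fourierIntegral_smul_eq_flip (L := innerₗ V)
    Real.continuous_fourierChar continuous_inner hφ hg).symm

variable [InnerProductSpace ℂ H]

theorem coeFn_fourier_toLp_two [CompleteSpace H] {g : V → H} (hg₁ : Integrable g)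
    (hg₂ : MemLp g 2) : (𝓕 (hg₂.toLp g) : Lp H 2 (volume : Measure V)) =ᵐ[volume] 𝓕 g := by
  have h_cont : Continuous (𝓕 g) :=
    VectorFourier.fourierIntegral_continuous Real.continuous_fourierChar
      (L := innerₗ V) continuous_inner hg₁
  refine ae_eq_of_integral_contDiff_smul_eq ((Lp.memLp _).locallyIntegrable (by norm_num))
    h_cont.locallyIntegrable fun φ φ_smooth φ_supp ↦ ?_
  let Φ : 𝓢(V, ℂ) := HasCompactSupport.toSchwartzMap (f := fun x ↦ (φ x : ℂ))
    (φ_supp.comp_left Complex.ofReal_zero) (Complex.ofRealCLM.contDiff.comp φ_smooth)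
  have h_smul (x : V) (v : H) : φ x • v = Φ x • v := (Complex.coe_smul (φ x) v).symm
  simp only [h_smul]
  calc ∫ ξ, Φ ξ • (𝓕 (hg₂.toLp g) : Lp H 2 (volume : Measure V)) ξ
      = ∫ x, 𝓕 Φ x • hg₂.toLp g x := by
        simpa only [TemperedDistribution.fourier_apply, Lp.toTemperedDistribution_apply] using
          congrArg (fun T ↦ T Φ) (Lp.fourier_toTemperedDistribution_eq (hg₂.toLp g)).symm
    _ = ∫ x, 𝓕 (Φ : V → ℂ) x • g x := by
        refine integral_congr_ae ?_
        filter_upwards [hg₂.coeFn_toLp] with x hx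
        rw [hx, SchwartzMap.fourier_coe]
    _ = ∫ ξ, Φ ξ • 𝓕 g ξ := (integral_smul_fourier_eq Φ.integrable hg₁).symm

theorem integral_norm_sq_coeFn_Lp_two {X : Type*} [MeasurableSpace X] {μ : Measure X}
    (u : Lp H 2 μ) : ∫ x, ‖u x‖ ^ 2 ∂μ = ‖u‖ ^ 2 := by
  have h := L2.inner_def (𝕜 := ℂ) u u
  simp only [inner_self_eq_norm_sq_to_K] at h
  exact_mod_cast h.symm

theorem integral_norm_sq_fourier [CompleteSpace H] {g : V → H} (hg₁ : Integrable g)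
    (hg₂ : MemLp g 2) : ∫ ξ, ‖𝓕 g ξ‖ ^ 2 = ∫ x, ‖g x‖ ^ 2 := by
  calc ∫ ξ, ‖𝓕 g ξ‖ ^ 2
      = ∫ ξ, ‖(𝓕 (hg₂.toLp g) : Lp H 2 (volume : Measure V)) ξ‖ ^ 2 :=
        integral_congr_ae ((coeFn_fourier_toLp_two hg₁ hg₂).fun_comp (‖·‖ ^ 2)).symm
    _ = ∫ x, ‖hg₂.toLp g x‖ ^ 2 := by
        rw [integral_norm_sq_coeFn_Lp_two, integral_norm_sq_coeFn_Lp_two, Lp.norm_fourier_eq]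
    _ = ∫ x, ‖g x‖ ^ 2 := integral_congr_ae (hg₂.coeFn_toLp.fun_comp (‖·‖ ^ 2))

end Plancherel

section Correlation

variable {G 𝕜 : Type*} [AddGroup G] [MeasurableSpace G] [MeasurableAdd₂ G] [MeasurableNeg G]
  {μ : Measure G} [SFinite μ] [μ.IsAddRightInvariant] [μ.IsNegInvariant] [RCLike 𝕜] {u v : G → 𝕜}

theorem ae_integrable_comp_sub_mul (hu : Integrable u μ) (hv : Integrable v μ) :
    ∀ᵐ x ∂μ, Integrable (fun t ↦ u (t - x) * v t) μ := by
  filter_upwards [hv.ae_convolution_exists (ContinuousLinearMap.mul 𝕜 𝕜) hu.comp_neg] with x hx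
  simpa only [ConvolutionExistsAt, ContinuousLinearMap.mul_apply', neg_sub, mul_comm] using hx

theorem integral_integral_comp_sub_mul (hu : Integrable u μ) (hv : Integrable v μ) :
    ∫ x, ∫ t, u (t - x) * v t ∂μ ∂μ = (∫ t, u t ∂μ) * ∫ t, v t ∂μ := by
  simpa only [convolution_def, ContinuousLinearMap.mul_apply', neg_sub, mul_comm,
    integral_neg_eq_self u μ] using
    integral_convolution (ContinuousLinearMap.mul 𝕜 𝕜) hv hu.comp_neg

end Correlation

section WindowedFourier

variable {V H : Type*} [NormedAddCommGroup V] [InnerProductSpace ℝ V] [FiniteDimensional ℝ V]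
  [MeasurableSpace V] [BorelSpace V] [NormedAddCommGroup H] {w : V → ℂ} {f : V → H}

/-- The windowed (short-time) Fourier transform of `f` with window `w`, at position `β` and
frequency `ξ`, in the normalization `e ^ (-2πi⟪t, ξ⟫)` of `𝓕`. -/
noncomputable def windowedFourier [NormedSpace ℂ H] (w : V → ℂ) (f : V → H) (β ξ : V) : H :=
  𝓕 (fun t ↦ conj (w (t - β)) • f t) ξ

theorem integrable_conj_comp_sub_smul [NormedSpace ℂ H] (hw : MemLp w 2) (hf : MemLp f 2) (β : V) :
    Integrable (fun t ↦ conj (w (t - β)) • f t) :=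
  memLp_one_iff_integrable.1 <| hf.smul
    (hw.comp_measurePreserving (measurePreserving_sub_right volume β)).star

theorem norm_sq_conj_smul {𝕜 : Type*} [RCLike 𝕜] [NormedSpace 𝕜 H] (z : 𝕜) (x : H) :
    ‖conj z • x‖ ^ 2 = ‖z‖ ^ 2 * ‖x‖ ^ 2 := by
  rw [norm_smul, RCLike.norm_conj, mul_pow]

theorem ae_memLp_two_conj_comp_sub_smul [NormedSpace ℂ H] (hw : MemLp w 2) (hf : MemLp f 2) :
    ∀ᵐ β, MemLp (fun t ↦ conj (w (t - β)) • f t) 2 := by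
  filter_upwards [ae_integrable_comp_sub_mul (hw.integrable_norm_pow two_ne_zero)
    (hf.integrable_norm_pow two_ne_zero)] with β hβ
  rw [memLp_two_iff_integrable_sq_norm (integrable_conj_comp_sub_smul hw hf β).1]
  simpa only [norm_sq_conj_smul] using hβ

theorem integral_integral_norm_sq_windowedFourier [InnerProductSpace ℂ H] [CompleteSpace H]
    (hw : MemLp w 2) (hf : MemLp f 2) :
    ∫ β, ∫ ξ, ‖windowedFourier w f β ξ‖ ^ 2 = (∫ t, ‖w t‖ ^ 2) * ∫ t, ‖f t‖ ^ 2 := by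
  calc ∫ β, ∫ ξ, ‖windowedFourier w f β ξ‖ ^ 2
      = ∫ β, ∫ t, ‖w (t - β)‖ ^ 2 * ‖f t‖ ^ 2 := by
        refine integral_congr_ae ?_
        filter_upwards [ae_memLp_two_conj_comp_sub_smul hw hf] with β hβ
        simpa only [windowedFourier, norm_sq_conj_smul] using
          integral_norm_sq_fourier (integrable_conj_comp_sub_smul hw hf β) hβ
    _ = (∫ t, ‖w t‖ ^ 2) * ∫ t, ‖f t‖ ^ 2 :=
        integral_integral_comp_sub_mul (hw.integrable_norm_pow two_ne_zero)
          (hf.integrable_norm_pow two_ne_zero)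

end WindowedFourier

section Dilation

theorem memLp_comp_smul {E F : Type*} [NormedAddCommGroup E] [NormedSpace ℝ E]
    [FiniteDimensional ℝ E] [MeasurableSpace E] [BorelSpace E] {μ : Measure E} [μ.IsAddHaarMeasure]
    [NormedAddCommGroup F] {p : ENNReal} {f : E → F} (hf : MemLp f p μ) {r : ℝ} (hr : r ≠ 0) :
    MemLp (fun x ↦ f (r • x)) p μ := by
  refine MemLp.comp_of_map (f := (r • ·)) ?_ (by fun_prop)
  rw [Measure.map_addHaar_smul μ hr]
  exact hf.smul_measure ENNReal.ofReal_ne_top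

variable {ψ : ℝ → ℂ} {α : ℝ}

theorem memLp_dil {p : ENNReal} (hψ : MemLp ψ p) (hα : α ≠ 0) : MemLp (dil ψ α) p := by
  refine MemLp.const_mul ?_ _
  simpa only [smul_eq_mul, div_eq_inv_mul] using memLp_comp_smul hψ (inv_ne_zero hα)

theorem norm_sq_dil (hα : 0 ≤ α) (t : ℝ) : ‖dil ψ α t‖ ^ 2 = α⁻¹ * ‖ψ (t / α)‖ ^ 2 := by
  have h_rpow : (α ^ (-(1 / 2 : ℝ))) ^ 2 = α⁻¹ := by
    rw [← Real.rpow_mul_natCast hα, ← Real.rpow_neg_one]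
    norm_num
  rw [dil, norm_mul, mul_pow, Complex.norm_real, Real.norm_eq_abs, sq_abs, h_rpow]

theorem integral_norm_sq_dil (hα : 0 < α) : ∫ t, ‖dil ψ α t‖ ^ 2 = ∫ t, ‖ψ t‖ ^ 2 := by
  simp only [norm_sq_dil hα.le]
  rw [integral_const_mul, Measure.integral_comp_div (fun t ↦ ‖ψ t‖ ^ 2), abs_of_pos hα,
    smul_eq_mul, inv_mul_cancel_left₀ hα.ne']

end Dilation

section QuadraticChirp

/-- The unimodular chirp `t ↦ e ^ (i(p t² + q t))`; the phases of the quadratic-phase wave packet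
transform that do not couple two of its variables are products of such chirps. -/
noncomputable def quadraticChirp (p q t : ℝ) : ℂ :=
  exp (((p * t ^ 2 + q * t : ℝ) : ℂ) * I)

variable (p q t : ℝ)

theorem norm_quadraticChirp : ‖quadraticChirp p q t‖ = 1 :=
  norm_exp_ofReal_mul_I _

theorem norm_quadraticChirp_mul (z : ℂ) : ‖quadraticChirp p q t * z‖ = ‖z‖ := by
  rw [norm_mul, norm_quadraticChirp, one_mul]

theorem continuous_quadraticChirp : Continuous (quadraticChirp p q) := by
  unfold quadraticChirp
  fun_prop

theorem memLp_quadraticChirp_mul {r : ENNReal} {μ : Measure ℝ} {f : ℝ → ℂ} (hf : MemLp f r μ) :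
    MemLp (fun t ↦ quadraticChirp p q t * f t) r μ :=
  hf.congr_norm ((continuous_quadraticChirp p q).aestronglyMeasurable.mul hf.1)
    (.of_forall fun t ↦ (norm_quadraticChirp_mul p q t (f t)).symm)

end QuadraticChirp

section QPWPT

theorem norm_sq_qpConst {b : ℝ} (hb : 0 ≤ b) : ‖qpConst b‖ ^ 2 = b / (2 * Real.pi) := by
  rw [qpConst, ← ofReal_neg, norm_mul, norm_exp_ofReal_mul_I, mul_one, norm_real,
    Real.norm_eq_abs, sq_abs, Real.sq_sqrt (by positivity)]

variable (a b c d e : ℝ) (ψ f : ℝ → ℂ) (ξ β α : ℝ)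

theorem QPWPT_eq_windowedFourier :
    QPWPT a b c d e ψ f ξ β α = qpConst b * (quadraticChirp c e ξ * (quadraticChirp (-a) (-d) β *
      windowedFourier (dil ψ α) (fun t ↦ quadraticChirp (2 * a) (2 * d) t * f t) β
        (-(b / (2 * Real.pi)) * ξ))) := by
  have h_freq (t : ℝ) : -2 * Real.pi * t * (-(b / (2 * Real.pi)) * ξ) = b * t * ξ := by
    field_simp
  simp only [QPWPT, windowedFourier, Real.fourier_real_eq_integral_exp_smul, h_freq,
    ← integral_const_mul]
  congr with t
  have h_phase : exp (I * ((2 * a * t ^ 2 + b * t * ξ + c * ξ ^ 2 + 2 * d * t + e * ξ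
      - a * β ^ 2 - d * β : ℝ) : ℂ)) = quadraticChirp c e ξ * quadraticChirp (-a) (-d) β *
        exp (((b * t * ξ : ℝ) : ℂ) * I) * quadraticChirp (2 * a) (2 * d) t := by
    simp only [quadraticChirp, ← exp_add]
    push_cast
    ring_nf
  rw [h_phase, smul_eq_mul, smul_eq_mul]
  ring

variable {b} in
theorem norm_sq_QPWPT (hb : 0 ≤ b) :
    ‖QPWPT a b c d e ψ f ξ β α‖ ^ 2 = b / (2 * Real.pi) *
      ‖windowedFourier (dil ψ α) (fun t ↦ quadraticChirp (2 * a) (2 * d) t * f t) β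
        (-(b / (2 * Real.pi)) * ξ)‖ ^ 2 := by
  rw [QPWPT_eq_windowedFourier, norm_mul, norm_quadraticChirp_mul, norm_quadraticChirp_mul,
    mul_pow, norm_sq_qpConst hb]

variable {b} in
theorem integral_norm_sq_QPWPT (hb : 0 < b) :
    ∫ ξ, ‖QPWPT a b c d e ψ f ξ β α‖ ^ 2 = ∫ ξ,
      ‖windowedFourier (dil ψ α) (fun t ↦ quadraticChirp (2 * a) (2 * d) t * f t) β ξ‖ ^ 2 := by
  have h_scale : 0 < b / (2 * Real.pi) := by positivity
  simp only [norm_sq_QPWPT a c d e ψ f _ β α hb.le]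
  rw [integral_const_mul, Measure.integral_comp_mul_left (fun ξ ↦ ‖windowedFourier _ _ β ξ‖ ^ 2),
    smul_eq_mul, abs_inv, abs_neg, abs_of_pos h_scale, mul_inv_cancel_left₀ h_scale.ne']

end QPWPT

theorem qpwpt_energy_conservation_general (a b c d e : ℝ) (hb : 0 < b) (f ψ : ℝ → ℂ)
    (hf : MemLp f 2 volume) (hψ : MemLp ψ 2 volume) (α : ℝ) (hα : 0 < α) :
    ∫ β : ℝ, ∫ ξ : ℝ, ‖QPWPT a b c d e ψ f ξ β α‖ ^ 2
      = (∫ t : ℝ, ‖ψ t‖ ^ 2) * ∫ t : ℝ, ‖f t‖ ^ 2 := by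
  simp only [integral_norm_sq_QPWPT a c d e ψ f _ α hb]
  rw [integral_integral_norm_sq_windowedFourier (memLp_dil hψ hα.ne')
    (memLp_quadraticChirp_mul (2 * a) (2 * d) hf), integral_norm_sq_dil hα]
  simp only [norm_quadraticChirp_mul]

theorem qpwpt_energy_conservation (a b c d e : ℝ) (hb : 0 < b) (f ψ : ℝ → ℂ)
    (hf1 : Integrable f volume) (hf2 : MemLp f 2 volume)
    (hψ1 : Integrable ψ volume) (hψ2 : MemLp ψ 2 volume)
    (α : ℝ) (hα : 0 < α) :
    ∫ β : ℝ, ∫ ξ : ℝ, ‖QPWPT a b c d e ψ f ξ β α‖ ^ 2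
      = (∫ t : ℝ, ‖ψ t‖ ^ 2) * ∫ t : ℝ, ‖f t‖ ^ 2 :=
  qpwpt_energy_conservation_general a b c d e hb f ψ hf2 hψ2 α hα
end
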